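/- Let 1 < p ≤ ∞ and let ρ, σ₁, σ be densities in M_m with σ₁ and σ positive definite. Then D_p(ρ‖σ) ≤ D_p(ρ‖σ₁) + D_∞(σ₁‖σ). -/

import Mathlib

open scoped ENNReal Classical ComplexOrder
open Matrix

noncomputable section

namespace GJL

variable {n : Type*} [Fintype n] [DecidableEq n]

/-- `Mat n` is the matrix *-algebra with rows and columns indexed by `n`. -/
abbrev Mat (n : Type*) [Fintype n] [DecidableEq n] := Matrix n n ℂ

/-- A density matrix: positive semidefinite with trace one. -/
def IsDensity (ρ : Mat n) : Prop := ρ.PosSemidef ∧ ρ.trace = 1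

/-- The real part of the (matrix) trace. -/
def traceR (A : Mat n) : ℝ := (A.trace).re

/-- Real matrix powers via the continuous functional calculus.  For positive
semidefinite matrices and negative exponents this is the generalized inverse
power on the support, since `(0 : ℝ) ^ r = 0` for `r ≠ 0`. -/
def mpow (A : Mat n) (r : ℝ) : Mat n := cfc (fun x : ℝ => x ^ r) A

/-- Matrix logarithm on the support (`Real.log 0 = 0`). -/
def mlog (A : Mat n) : Mat n := cfc Real.log A

/-- Schatten `p`-norm `(Tr ((x* x)^(p/2)))^(1/p)`. -/
def snorm (p : ℝ) (x : Mat n) : ℝ := (traceR (mpow (xᴴ * x) (p/2))) ^ (1/p)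

/-- Operator norm `‖x‖_∞`. -/
def opNorm (x : Mat n) : ℝ := ‖(Matrix.toEuclideanCLM (𝕜 := ℂ) x : EuclideanSpace ℂ n →L[ℂ] EuclideanSpace ℂ n)‖

/-- The support projection of `ρ` is dominated by that of `σ` (for positive
semidefinite matrices: `ker σ ⊆ ker ρ`). -/
def suppLe (ρ σ : Mat n) : Prop := ∀ v, σ.mulVec v = 0 → ρ.mulVec v = 0

/-- `e` is the support projection of `ρ`. -/
def IsSupportProj (ρ e : Mat n) : Prop :=
  e.IsHermitian ∧ e * e = e ∧ ∀ v, e.mulVec v = 0 ↔ ρ.mulVec v = 0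

/-- `D_∞(ρ‖σ) = log min {λ ≥ 0 | ρ ≤ λ σ}`, `⊤` if no such `λ` exists. -/
def Dinf (ρ σ : Mat n) : EReal :=
  if ∃ c : ℝ, 0 ≤ c ∧ (c • σ - ρ).PosSemidef then
    ((Real.log (sInf {c : ℝ | 0 ≤ c ∧ (c • σ - ρ).PosSemidef}) : ℝ) : EReal)
  else ⊤

/-- Umegaki relative entropy `D(ρ‖σ) = Tr(ρ log ρ - ρ log σ)`, `⊤` if the
support condition fails. -/
def DU (ρ σ : Mat n) : EReal :=
  if suppLe ρ σ then ((traceR (ρ * mlog ρ - ρ * mlog σ) : ℝ) : EReal) else ⊤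

/-- The sandwiched matrix `σ^{(1-p)/(2p)} ρ σ^{(1-p)/(2p)}`; note that for
`p > 1` the exponent `(1-p)/(2p)` equals `-1/(2p')` with `1/p + 1/p' = 1`. -/
def sandwich (p : ℝ) (ρ σ : Mat n) : Mat n :=
  mpow σ ((1 - p)/(2*p)) * ρ * mpow σ ((1 - p)/(2*p))

/-- The sandwiched Rényi relative entropy `D_p(ρ‖σ)` for `p ∈ [1/2, ∞]`:
for `p ∈ (1,∞)` it is `p' log ‖σ^{-1/(2p')} ρ σ^{-1/(2p')}‖_p
= (p-1)⁻¹ log Tr ((σ^{-1/(2p')} ρ σ^{-1/(2p')})^p)` when the support of `ρ` is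
dominated by that of `σ` and `⊤` otherwise; for `p ∈ [1/2, 1)` it is
`(p-1)⁻¹ log Tr ((σ^{(1-p)/(2p)} ρ σ^{(1-p)/(2p)})^p)` (`⊤` when the trace
vanishes, i.e. when the honest value is `+∞`); `D_1` is the Umegaki relative
entropy and `D_∞` the max-relative entropy. -/
def Dp (p : ℝ≥0∞) (ρ σ : Mat n) : EReal :=
  if p = ⊤ then Dinf ρ σ
  else if p = 1 then DU ρ σ
  else if 1 < p.toReal ∧ ¬ suppLe ρ σ then ⊤
  else if traceR (mpow (sandwich p.toReal ρ σ) p.toReal) = 0 then ⊤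
  else (((p.toReal - 1)⁻¹ * Real.log (traceR (mpow (sandwich p.toReal ρ σ) p.toReal)) : ℝ) : EReal)

/-- `D_p(ρ‖S) = inf { D_p(ρ‖σ) | σ a density in S }`. -/
def DpSet (p : ℝ≥0∞) (ρ : Mat n) (S : Set (Mat n)) : EReal :=
  ⨅ σ ∈ {σ ∈ S | IsDensity σ}, Dp p ρ σ

/-- `D_p(A‖S) = sup { D_p(ρ‖S) | ρ a density in A }`. -/
def DpRel (p : ℝ≥0∞) (A S : Set (Mat n)) : EReal :=
  ⨆ ρ ∈ {ρ ∈ A | IsDensity ρ}, DpSet p ρ S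

open scoped Kronecker in
/-- The algebraic tensor product `N₁ ⊗ N₂ ⊆ M_{n₁} ⊗ M_{n₂} = M_{n₁ × n₂}`,
realized as the linear span of Kronecker products. -/
def tensorSpan {n₁ n₂ : Type*} [Fintype n₁] [DecidableEq n₁] [Fintype n₂] [DecidableEq n₂]
    (N₁ : Set (Mat n₁)) (N₂ : Set (Mat n₂)) : Set (Mat (n₁ × n₂)) :=
  ↑(Submodule.span ℂ {z : Mat (n₁ × n₂) | ∃ x ∈ N₁, ∃ y ∈ N₂, z = x ⊗ₖ y})

/-- `D_{p,cb}(M‖N) = sup_k D_p(M_k ⊗ M ‖ M_k ⊗ N)`. -/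
def DpCb (p : ℝ≥0∞) (N : Set (Mat n)) : EReal :=
  ⨆ k : ℕ, DpRel p Set.univ (tensorSpan (Set.univ : Set (Mat (Fin k))) N)

/-- `E` is the trace preserving conditional expectation onto `N`, i.e. the
orthogonal projection onto `N` with respect to the Hilbert–Schmidt inner
product `⟨x,y⟩ = Tr(x* y)`. -/
def IsCondExp (N : Set (Mat n)) (E : Mat n →ₗ[ℂ] Mat n) : Prop :=
  (∀ x, E x ∈ N) ∧ (∀ x ∈ N, E x = x) ∧
    ∀ x y, y ∈ N → ((E x)ᴴ * y).trace = (xᴴ * y).trace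

/-- The Pimsner–Popa index constant
`λ(M:N) = max {c ≥ 0 | c x ≤ E(x) for all x ≥ 0}`. -/
def ppIndex (E : Mat n →ₗ[ℂ] Mat n) : ℝ :=
  sSup {c : ℝ | 0 ≤ c ∧ ∀ x : Mat n, x.PosSemidef → (E x - c • x).PosSemidef}

/-- von Neumann entropy `H(ρ) = -Tr(ρ log ρ)`. -/
def vnEntropy (ρ : Mat n) : ℝ := - traceR (ρ * mlog ρ)

/-- The amplification `id_{M_k} ⊗ Φ` acting on `M_k ⊗ M_n = M_{k × n}`,
applying `Φ` blockwise. -/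
def ampFun (k : Type*) [Fintype k] [DecidableEq k] (Φ : Mat n →ₗ[ℂ] Mat n)
    (X : Mat (k × n)) : Mat (k × n) :=
  Matrix.of fun a b => Φ (Matrix.of fun s t => X (a.1, s) (b.1, t)) a.2 b.2

/-- Complete positivity: all amplifications `id_{M_k} ⊗ Φ` preserve positive
semidefiniteness. -/
def IsCP (Φ : Mat n →ₗ[ℂ] Mat n) : Prop :=
  ∀ (k : ℕ) (X : Mat (Fin k × n)), X.PosSemidef → (ampFun (Fin k) Φ X).PosSemidef

/-- Completely positive and trace preserving. -/
def IsCPTP (Φ : Mat n →ₗ[ℂ] Mat n) : Prop :=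
  IsCP Φ ∧ ∀ x : Mat n, (Φ x).trace = x.trace

/-!
The relative entropy is antitone in its second argument and `D_p(ρ‖c σ) = D_p(ρ‖σ) - log c`. If
`t = D_∞(σ₁‖σ)` is finite then `σ₁ ≤ eᵗ σ`, whence
`D_p(ρ‖σ) - t = D_p(ρ‖eᵗ σ) ≤ D_p(ρ‖σ₁)`.

Antitonicity for `p < ∞`: write `ρ = Y* Y` and `s = (p - 1) / p ∈ (0, 1)`. Since `X* X` and `X X*`
have the same spectrum, the trace of the `p`-th power of the sandwiched matrix equals
`Tr ((Y σ⁻ˢ Y*)ᵖ)`. If `σ₁ ≤ σ` then `σ₁ˢ ≤ σˢ` by operator monotonicity, so with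
`T = σ₁^(s/2) σ^(-s/2)` we get `T* T ≤ 1`, hence `T T* ≤ 1` and `Y σ⁻ˢ Y* ≤ Y σ₁⁻ˢ Y*`. Finally
`A ↦ Tr Aᵖ` is monotone: in an eigenbasis of `A` the diagonal of `B ≥ A` dominates the eigenvalues
of `A`, and Jensen's inequality bounds the sum of the `p`-th powers of that diagonal by `Tr Bᵖ`.
-/

theorem IsDensity.ne_zero {ρ : Mat n} (hρ : IsDensity ρ) : ρ ≠ 0 := by
  rintro rfl
  simpa using hρ.2

section SpectralTrace

open scoped MatrixOrder

variable {A B : Mat n} {f : ℝ → ℝ} {s : Set ℝ}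

theorem traceR_eq_sum_diag (A : Mat n) : traceR A = ∑ i, (A i i).re := by
  simp [traceR, trace]

theorem traceR_smul (c : ℝ) (A : Mat n) : traceR (c • A) = c * traceR A := by
  simp [traceR, trace_smul]

theorem re_cfc_apply_diag (f : ℝ → ℝ) (hA : A.IsHermitian) (i : n) :
    (cfc f A i i).re =
      ∑ j, ‖(hA.eigenvectorUnitary : Mat n) i j‖ ^ 2 * f (hA.eigenvalues j) := by
  rw [hA.cfc_eq f, IsHermitian.cfc, Unitary.conjStarAlgAut_apply, mul_apply, Complex.re_sum]
  refine Finset.sum_congr rfl fun j _ ↦ ?_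
  rw [mul_diagonal, star_apply, mul_right_comm, RCLike.star_def, Complex.mul_conj',
    ← Complex.ofReal_pow, Complex.re_ofReal_mul]
  rfl

theorem sum_sq_norm_eigenvectorUnitary_apply (hA : A.IsHermitian) (i : n) :
    ∑ j, ‖(hA.eigenvectorUnitary : Mat n) i j‖ ^ 2 = 1 := by
  have h := re_cfc_apply_diag (fun _ ↦ 1) hA i
  rw [cfc_const_one ℝ A hA.isSelfAdjoint] at h
  simpa only [one_apply_eq, Complex.one_re, mul_one] using h.symm

theorem re_diag_eq_sum_eigenvalues (hA : A.IsHermitian) (i : n) :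
    (A i i).re = ∑ j, ‖(hA.eigenvectorUnitary : Mat n) i j‖ ^ 2 * hA.eigenvalues j := by
  simpa only [cfc_id' ℝ A hA.isSelfAdjoint] using re_cfc_apply_diag (fun x ↦ x) hA i

theorem re_diag_mem_of_spectrum_subset (hA : A.IsHermitian) (hs : Convex ℝ s)
    (hAs : spectrum ℝ A ⊆ s) (i : n) : (A i i).re ∈ s := by
  rw [re_diag_eq_sum_eigenvalues hA]
  exact hs.sum_mem (fun _ _ ↦ sq_nonneg _) (sum_sq_norm_eigenvectorUnitary_apply hA i)
    fun j _ ↦ hAs (hA.eigenvalues_mem_spectrum_real j)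

theorem map_re_diag_le_re_cfc_diag (hA : A.IsHermitian) (hf : ConvexOn ℝ s f)
    (hAs : spectrum ℝ A ⊆ s) (i : n) : f (A i i).re ≤ (cfc f A i i).re := by
  rw [re_diag_eq_sum_eigenvalues hA, re_cfc_apply_diag f hA]
  exact hf.map_sum_le (fun _ _ ↦ sq_nonneg _) (sum_sq_norm_eigenvectorUnitary_apply hA i)
    fun j _ ↦ hAs (hA.eigenvalues_mem_spectrum_real j)

theorem traceR_cfc (f : ℝ → ℝ) (hA : A.IsHermitian) :
    traceR (cfc f A) = ∑ i, f (hA.eigenvalues i) := by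
  rw [hA.cfc_eq f, IsHermitian.cfc, Unitary.conjStarAlgAut_apply, traceR, trace_mul_comm,
    ← mul_assoc]
  simp [trace]

theorem traceR_cfc_eq_of_charpoly_eq (f : ℝ → ℝ) (hA : A.IsHermitian) (hB : B.IsHermitian)
    (h : A.charpoly = B.charpoly) : traceR (cfc f A) = traceR (cfc f B) := by
  rw [traceR_cfc f hA, traceR_cfc f hB, (hA.eigenvalues_eq_eigenvalues_iff hB).2 h]

theorem traceR_cfc_mul_conjTranspose_self (f : ℝ → ℝ) (X : Mat n) :
    traceR (cfc f (X * Xᴴ)) = traceR (cfc f (Xᴴ * X)) :=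
  traceR_cfc_eq_of_charpoly_eq f (isHermitian_mul_conjTranspose_self X)
    (isHermitian_conjTranspose_mul_self X) (charpoly_mul_comm X Xᴴ)

theorem sum_map_re_diag_le_traceR_cfc (hA : A.IsHermitian) (hf : ConvexOn ℝ s f)
    (hAs : spectrum ℝ A ⊆ s) : ∑ i, f (A i i).re ≤ traceR (cfc f A) := by
  rw [traceR_eq_sum_diag]
  exact Finset.sum_le_sum fun i _ ↦ map_re_diag_le_re_cfc_diag hA hf hAs i

theorem traceR_cfc_le_traceR_cfc (hA : A.IsHermitian) (hB : B.IsHermitian) (hAB : A ≤ B)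
    (hf : ConvexOn ℝ s f) (hmono : MonotoneOn f s) (hAs : spectrum ℝ A ⊆ s)
    (hBs : spectrum ℝ B ⊆ s) : traceR (cfc f A) ≤ traceR (cfc f B) := by
  set U : Mat n := ↑hA.eigenvectorUnitary
  have hUU : U * star U = 1 := Unitary.coe_mul_star_self _
  have hB' : (star U * B * U).IsHermitian := isHermitian_conjTranspose_mul_mul U hB
  have hspec : spectrum ℝ (star U * B * U) = spectrum ℝ B :=
    Unitary.spectrum_star_left_conjugate
  have hdiag (i : n) : hA.eigenvalues i ≤ ((star U * B * U) i i).re := by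
    have h : star U * A * U ≤ star U * B * U := star_left_conjugate_le_conjugate hAB U
    rw [← Unitary.conjStarAlgAut_star_apply (S := ℂ),
      hA.conjStarAlgAut_star_eigenvectorUnitary] at h
    simpa using (Complex.le_def.1 ((le_iff.1 h).diag_nonneg (i := i))).1
  calc traceR (cfc f A) = ∑ i, f (hA.eigenvalues i) := traceR_cfc f hA
    _ ≤ ∑ i, f ((star U * B * U) i i).re := Finset.sum_le_sum fun i _ ↦
        hmono (hAs (hA.eigenvalues_mem_spectrum_real i))
          (re_diag_mem_of_spectrum_subset hB' hf.1 (hspec.trans_subset hBs) i) (hdiag i)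
    _ ≤ traceR (cfc f (star U * B * U)) :=
        sum_map_re_diag_le_traceR_cfc hB' hf (hspec.trans_subset hBs)
    _ = traceR (cfc f B) := traceR_cfc_eq_of_charpoly_eq f hB' hB <| by
        rw [charpoly_mul_comm, ← mul_assoc, hUU, one_mul]

end SpectralTrace

section MatrixPower

open scoped MatrixOrder Matrix.Norms.L2Operator

variable {A B : Mat n}

theorem continuousOn_spectrum (f : ℝ → ℝ) (A : Mat n) : ContinuousOn f (spectrum ℝ A) :=
  finite_real_spectrum.continuousOn f

theorem posSemidef_of_le (hA : A.PosSemidef) (hAB : A ≤ B) : B.PosSemidef :=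
  nonneg_iff_posSemidef.1 ((nonneg_iff_posSemidef.2 hA).trans hAB)

theorem spectrum_subset_Ici (hA : A.PosSemidef) : spectrum ℝ A ⊆ Set.Ici 0 :=
  fun _ hx ↦ spectrum_nonneg_of_nonneg (nonneg_iff_posSemidef.2 hA) hx

theorem isHermitian_mpow (A : Mat n) (r : ℝ) : (mpow A r).IsHermitian :=
  cfc_predicate _ A

theorem posSemidef_mpow (hA : A.PosSemidef) (r : ℝ) : (mpow A r).PosSemidef :=
  nonneg_iff_posSemidef.1 <| cfc_nonneg fun _ hx ↦ Real.rpow_nonneg (spectrum_subset_Ici hA hx) r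

theorem mpow_eq_rpow (hA : A.PosSemidef) (r : ℝ) : mpow A r = A ^ r :=
  (CFC.rpow_eq_cfc_real (nonneg_iff_posSemidef.2 hA)).symm

-- Pitfall: for `r ≠ 0`, `mpow A r * mpow A (-r)` is the support projection of `A`, but
-- `mpow A 0 = 1`.
theorem mpow_mul_mpow (hA : A.PosSemidef) {r t : ℝ} (hrt : r + t ≠ 0) :
    mpow A r * mpow A t = mpow A (r + t) := by
  unfold mpow
  rw [← cfc_mul _ _ A (continuousOn_spectrum _ A) (continuousOn_spectrum _ A)]
  exact cfc_congr fun x hx ↦ (Real.rpow_add' (spectrum_subset_Ici hA hx) hrt).symm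

theorem mpow_half_mul_mpow_half (hA : A.PosSemidef) {r : ℝ} (hr : r ≠ 0) :
    mpow A (r / 2) * mpow A (r / 2) = mpow A r := by
  rw [mpow_mul_mpow hA (by rwa [add_halves]), add_halves]

theorem mul_mpow_mul_mpow_neg (hA : A.PosSemidef) (r : ℝ) :
    A * (mpow A r * mpow A (-r)) = A := by
  nth_rw 1 [← cfc_id' ℝ A hA.1.isSelfAdjoint]
  unfold mpow
  rw [← cfc_mul _ _ A (continuousOn_spectrum _ A) (continuousOn_spectrum _ A),
    ← cfc_mul _ _ A (continuousOn_spectrum _ A) (continuousOn_spectrum _ A)]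
  conv_rhs => rw [← cfc_id' ℝ A hA.1.isSelfAdjoint]
  refine cfc_congr fun x hx ↦ ?_
  rcases (Set.mem_Ici.1 (spectrum_subset_Ici hA hx)).eq_or_lt with rfl | hpos
  · simp
  · simp [← Real.rpow_add hpos]

theorem mpow_smul (hA : A.PosSemidef) {c : ℝ} (hc : 0 ≤ c) (r : ℝ) :
    mpow (c • A) r = c ^ r • mpow A r := by
  unfold mpow
  rw [← cfc_comp_smul c _ A ((finite_real_spectrum.image _).continuousOn _) hA.1.isSelfAdjoint,
    ← cfc_smul _ _ A (continuousOn_spectrum _ A)]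
  exact cfc_congr fun x hx ↦ Real.mul_rpow hc (spectrum_subset_Ici hA hx)

theorem mpow_le_mpow (hA : A.PosSemidef) (hAB : A ≤ B) {r : ℝ} (hr : r ∈ Set.Icc 0 1) :
    mpow A r ≤ mpow B r := by
  have hB : B.PosSemidef := posSemidef_of_le hA hAB
  rw [mpow_eq_rpow hA, mpow_eq_rpow hB]
  exact CFC.rpow_le_rpow hr hAB

theorem traceR_mpow_le_traceR_mpow (hA : A.PosSemidef) (hAB : A ≤ B) {r : ℝ} (hr : 1 ≤ r) :
    traceR (mpow A r) ≤ traceR (mpow B r) := by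
  have hB : B.PosSemidef := posSemidef_of_le hA hAB
  exact traceR_cfc_le_traceR_cfc hA.1 hB.1 hAB (convexOn_rpow hr)
    (Real.monotoneOn_rpow_Ici_of_exponent_nonneg (zero_le_one.trans hr))
    (spectrum_subset_Ici hA) (spectrum_subset_Ici hB)

theorem traceR_mpow_pos (hA : A.PosSemidef) (hA₀ : A ≠ 0) (r : ℝ) : 0 < traceR (mpow A r) := by
  obtain ⟨i, hi⟩ : ∃ i, hA.1.eigenvalues i ≠ 0 :=
    Function.ne_iff.1 (hA.1.eigenvalues_eq_zero_iff.not.2 hA₀)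
  rw [mpow, traceR_cfc _ hA.1]
  exact Finset.sum_pos' (fun j _ ↦ Real.rpow_nonneg (hA.eigenvalues_nonneg j) r)
    ⟨i, Finset.mem_univ i, Real.rpow_pos_of_pos ((hA.eigenvalues_nonneg i).lt_of_ne' hi) r⟩

-- `T * Tᴴ` and `Tᴴ * T` have the same norm, and a positive matrix is `≤ 1` iff its norm is.
theorem mul_conjTranspose_self_le_one {T : Mat n} (hT : Tᴴ * T ≤ 1) : T * Tᴴ ≤ 1 := by
  refine (CStarAlgebra.norm_le_one_iff_of_nonneg _ (mul_star_self_nonneg T)).1 ?_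
  rw [CStarRing.norm_self_mul_star, ← CStarRing.norm_star_mul_self]
  exact (CStarAlgebra.norm_le_one_iff_of_nonneg _ (star_mul_self_nonneg T)).2 hT

end MatrixPower

section Support

open scoped MatrixOrder

variable {A B ρ σ σ₁ : Mat n}

theorem suppLe.trans (h₁ : suppLe ρ σ₁) (h₂ : suppLe σ₁ σ) : suppLe ρ σ :=
  fun v hv ↦ h₁ v (h₂ v hv)

theorem suppLe_smul_right_iff {c : ℝ} (hc : c ≠ 0) : suppLe ρ (c • σ) ↔ suppLe ρ σ := by
  simp only [suppLe, smul_mulVec, smul_eq_zero_iff_right hc]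

theorem suppLe_of_le (hA : A.PosSemidef) (hAB : A ≤ B) : suppLe A B := by
  intro v hBv
  have h : 0 ≤ star v ⬝ᵥ (B - A) *ᵥ v := (le_iff.1 hAB).dotProduct_mulVec_nonneg v
  rw [sub_mulVec, hBv, zero_sub, dotProduct_neg, neg_nonneg] at h
  exact (hA.dotProduct_mulVec_zero_iff v).1 (h.antisymm (hA.dotProduct_mulVec_nonneg v))

theorem suppLe_of_le_smul (hA : A.PosSemidef) {c : ℝ} (hAB : A ≤ c • B) : suppLe A B :=
  fun v hBv ↦ suppLe_of_le hA hAB v (by rw [smul_mulVec, hBv, smul_zero])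

theorem suppLe.mul_eq_zero (h : suppLe ρ σ) {X : Mat n} (hX : σ * X = 0) : ρ * X = 0 := by
  ext i j
  have hj : σ *ᵥ X.col j = 0 := funext fun k ↦ congr_fun₂ hX k j
  exact congr_fun (h _ hj) i

theorem suppLe.mul_mpow_mul_mpow_neg {Y : Mat n} (h : suppLe (Yᴴ * Y) σ) (hσ : σ.PosSemidef)
    (r : ℝ) : Y * mpow σ r * mpow σ (-r) = Y := by
  have hσX : σ * (1 - mpow σ r * mpow σ (-r)) = 0 := by
    rw [mul_sub, mul_one, GJL.mul_mpow_mul_mpow_neg hσ, sub_self]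
  have hYX := (conjTranspose_mul_self_mul_eq_zero Y _).1 (h.mul_eq_zero hσX)
  rw [mul_sub, mul_one, sub_eq_zero] at hYX
  rw [mul_assoc, ← hYX]

theorem exists_eq_conjTranspose_mul_self (hA : A.PosSemidef) : ∃ Y : Mat n, A = Yᴴ * Y :=
  CStarAlgebra.nonneg_iff_eq_star_mul_self.1 (nonneg_iff_posSemidef.2 hA)

end Support

section NegativePower

open scoped MatrixOrder

variable {A B : Mat n}

theorem mpow_neg_half_mul_mpow_mul_mpow_neg_half_le_one (hA : A.PosSemidef) (r : ℝ) :
    mpow A (-r / 2) * mpow A r * mpow A (-r / 2) ≤ 1 := by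
  unfold mpow
  rw [← cfc_mul _ _ A (continuousOn_spectrum _ A) (continuousOn_spectrum _ A),
    ← cfc_mul _ _ A (continuousOn_spectrum _ A) (continuousOn_spectrum _ A)]
  refine cfc_le_one _ A fun x hx ↦ ?_
  rcases (Set.mem_Ici.1 (spectrum_subset_Ici hA hx)).eq_or_lt with rfl | hpos
  · rcases eq_or_ne r 0 with rfl | hr <;> simp [*]
  · have hsum : -r / 2 + r + -r / 2 = 0 := by ring
    rw [← Real.rpow_add hpos, ← Real.rpow_add hpos, hsum, Real.rpow_zero]

theorem mpow_half_mul_mpow_neg_mul_mpow_half_le_one (hA : A.PosSemidef) (hAB : A ≤ B) {r : ℝ}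
    (hr : r ∈ Set.Ioc 0 1) : mpow A (r / 2) * mpow B (-r) * mpow A (r / 2) ≤ 1 := by
  have hB : B.PosSemidef := posSemidef_of_le hA hAB
  set T := mpow A (r / 2) * mpow B (-r / 2) with hT
  have hTstar : Tᴴ = mpow B (-r / 2) * mpow A (r / 2) := by
    rw [hT, conjTranspose_mul, (isHermitian_mpow _ _).eq, (isHermitian_mpow _ _).eq]
  have hTT : Tᴴ * T ≤ 1 := calc
    Tᴴ * T = mpow B (-r / 2) * mpow A r * mpow B (-r / 2) := by
      rw [hTstar, hT, ← mpow_half_mul_mpow_half hA hr.1.ne']; simp only [mul_assoc]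
    _ ≤ mpow B (-r / 2) * mpow B r * mpow B (-r / 2) :=
      (isHermitian_mpow B _).isSelfAdjoint.conjugate_le_conjugate
        (mpow_le_mpow hA hAB (Set.Ioc_subset_Icc_self hr))
    _ ≤ 1 := mpow_neg_half_mul_mpow_mul_mpow_neg_half_le_one hB r
  calc mpow A (r / 2) * mpow B (-r) * mpow A (r / 2) = T * Tᴴ := by
        rw [hTstar, hT, ← mpow_half_mul_mpow_half hB (neg_ne_zero.2 hr.1.ne')]
        simp only [mul_assoc]
    _ ≤ 1 := mul_conjTranspose_self_le_one hTT

theorem mul_mpow_neg_mul_conjTranspose_le (hA : A.PosSemidef) (hAB : A ≤ B) {Y : Mat n}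
    (hY : suppLe (Yᴴ * Y) A) {r : ℝ} (hr : r ∈ Set.Ioc 0 1) :
    Y * mpow B (-r) * Yᴴ ≤ Y * mpow A (-r) * Yᴴ := by
  set Z := Y * mpow A (-r / 2) with hZ
  have hZstar : Zᴴ = mpow A (-r / 2) * Yᴴ := by
    rw [hZ, conjTranspose_mul, (isHermitian_mpow _ _).eq]
  have hZY : Z * mpow A (r / 2) = Y := by
    simpa only [hZ, neg_div, neg_neg] using hY.mul_mpow_mul_mpow_neg hA (-r / 2)
  have hYZ : mpow A (r / 2) * Zᴴ = Yᴴ := by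
    rw [← (isHermitian_mpow A (r / 2)).eq, ← conjTranspose_mul, hZY]
  calc Y * mpow B (-r) * Yᴴ = Z * (mpow A (r / 2) * mpow B (-r) * mpow A (r / 2)) * Zᴴ := by
        nth_rw 1 [← hZY]
        rw [← hYZ]
        simp only [mul_assoc]
    _ ≤ Z * 1 * Zᴴ :=
        star_right_conjugate_le_conjugate
          (mpow_half_mul_mpow_neg_mul_mpow_half_le_one hA hAB hr) Z
    _ = Y * mpow A (-r) * Yᴴ := by
        rw [hZstar, hZ, ← mpow_half_mul_mpow_half hA (neg_ne_zero.2 hr.1.ne')]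
        simp only [mul_assoc, one_mul]

end NegativePower

section Sandwich

open scoped MatrixOrder

variable {p : ℝ} {ρ σ σ₁ : Mat n}

theorem sandwich_eq (p : ℝ) (ρ σ : Mat n) :
    sandwich p ρ σ = mpow σ ((1 - p) / p / 2) * ρ * mpow σ ((1 - p) / p / 2) := by
  rw [sandwich, div_div, mul_comm p]

theorem posSemidef_sandwich (p : ℝ) (hρ : ρ.PosSemidef) (σ : Mat n) :
    (sandwich p ρ σ).PosSemidef := by
  rw [sandwich]
  simpa only [(isHermitian_mpow σ _).eq] using
    hρ.conjTranspose_mul_mul_same (mpow σ ((1 - p) / (2 * p)))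

theorem sandwich_ne_zero (p : ℝ) (hρ : ρ.PosSemidef) (hρ₀ : ρ ≠ 0) (hσ : σ.PosSemidef)
    (h : suppLe ρ σ) : sandwich p ρ σ ≠ 0 := by
  obtain ⟨Y, rfl⟩ := exists_eq_conjTranspose_mul_self hρ
  set r := (1 - p) / (2 * p) with hr
  intro h₀
  have hY : Y * mpow σ r = 0 := by
    rw [← conjTranspose_mul_self_eq_zero, conjTranspose_mul, (isHermitian_mpow σ r).eq, ← h₀,
      sandwich, ← hr]
    simp only [mul_assoc]
  apply hρ₀
  rw [← h.mul_mpow_mul_mpow_neg hσ r, hY, zero_mul, mul_zero]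

theorem traceR_mpow_sandwich_pos (p : ℝ) (hρ : ρ.PosSemidef) (hρ₀ : ρ ≠ 0) (hσ : σ.PosSemidef)
    (h : suppLe ρ σ) : 0 < traceR (mpow (sandwich p ρ σ) p) :=
  traceR_mpow_pos (posSemidef_sandwich p hρ σ) (sandwich_ne_zero p hρ hρ₀ hσ h) p

theorem sandwich_smul_right (p : ℝ) (ρ : Mat n) (hσ : σ.PosSemidef) {c : ℝ} (hc : 0 < c) :
    sandwich p ρ (c • σ) = c ^ ((1 - p) / p) • sandwich p ρ σ := by
  rw [sandwich_eq, sandwich_eq, mpow_smul hσ hc.le]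
  simp only [smul_mul_assoc, mul_smul_comm, smul_smul, ← Real.rpow_add hc, add_halves]

theorem traceR_mpow_sandwich_smul_right (hp : p ≠ 0) (hρ : ρ.PosSemidef) (hσ : σ.PosSemidef)
    {c : ℝ} (hc : 0 < c) :
    traceR (mpow (sandwich p ρ (c • σ)) p) =
      c ^ (1 - p) * traceR (mpow (sandwich p ρ σ) p) := by
  rw [sandwich_smul_right p ρ hσ hc,
    mpow_smul (posSemidef_sandwich p hρ σ) (Real.rpow_nonneg hc.le _), traceR_smul,
    ← Real.rpow_mul hc.le, div_mul_cancel₀ _ hp]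

theorem traceR_mpow_sandwich_conjTranspose_mul_self (hp₀ : p ≠ 0) (hp₁ : p ≠ 1)
    (hσ : σ.PosSemidef) (Y : Mat n) :
    traceR (mpow (sandwich p (Yᴴ * Y) σ) p) =
      traceR (mpow (Y * mpow σ ((1 - p) / p) * Yᴴ) p) := by
  set X := Y * mpow σ ((1 - p) / p / 2) with hX
  have hXstar : Xᴴ = mpow σ ((1 - p) / p / 2) * Yᴴ := by
    rw [hX, conjTranspose_mul, (isHermitian_mpow _ _).eq]
  have hleft : sandwich p (Yᴴ * Y) σ = Xᴴ * X := by
    rw [hXstar, hX, sandwich_eq]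
    simp only [mul_assoc]
  have hright : Y * mpow σ ((1 - p) / p) * Yᴴ = X * Xᴴ := by
    rw [hXstar, hX, ← mpow_half_mul_mpow_half hσ (div_ne_zero (sub_ne_zero.2 hp₁.symm) hp₀)]
    simp only [mul_assoc]
  rw [hleft, hright]
  exact (traceR_cfc_mul_conjTranspose_self _ X).symm

theorem traceR_mpow_sandwich_anti_right (hp : 1 < p) (hρ : ρ.PosSemidef) (hσ₁ : σ₁.PosSemidef)
    (h : suppLe ρ σ₁) (hσ₁σ : σ₁ ≤ σ) :
    traceR (mpow (sandwich p ρ σ) p) ≤ traceR (mpow (sandwich p ρ σ₁) p) := by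
  obtain ⟨Y, rfl⟩ := exists_eq_conjTranspose_mul_self hρ
  have hσ : σ.PosSemidef := posSemidef_of_le hσ₁ hσ₁σ
  have hp₀ : 0 < p := zero_lt_one.trans hp
  have hexp : (p - 1) / p ∈ Set.Ioc 0 1 :=
    ⟨div_pos (sub_pos.2 hp) hp₀, (div_le_one hp₀).2 (sub_le_self p zero_le_one)⟩
  have hle : Y * mpow σ ((1 - p) / p) * Yᴴ ≤ Y * mpow σ₁ ((1 - p) / p) * Yᴴ := by
    simpa only [← neg_div, neg_sub] using mul_mpow_neg_mul_conjTranspose_le hσ₁ hσ₁σ h hexp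
  rw [traceR_mpow_sandwich_conjTranspose_mul_self hp₀.ne' hp.ne' hσ,
    traceR_mpow_sandwich_conjTranspose_mul_self hp₀.ne' hp.ne' hσ₁]
  exact traceR_mpow_le_traceR_mpow ((posSemidef_mpow hσ _).mul_mul_conjTranspose_same Y) hle hp.le

end Sandwich

section RelativeEntropy

open scoped MatrixOrder

variable {p : ℝ≥0∞} {ρ σ σ₁ : Mat n}

theorem pos_of_le_smul (hρ : ρ.PosSemidef) (hρ₀ : ρ ≠ 0) {c : ℝ} (hc : 0 ≤ c)
    (h : ρ ≤ c • σ) : 0 < c := by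
  refine hc.lt_of_ne ?_
  rintro rfl
  rw [zero_smul] at h
  exact hρ₀ (h.antisymm (nonneg_iff_posSemidef.2 hρ))

open scoped Matrix.Norms.L2Operator in
theorem isClosed_setOf_le_smul (ρ σ : Mat n) : IsClosed {c : ℝ | 0 ≤ c ∧ ρ ≤ c • σ} :=
  have h : IsClosed {c : ℝ | ρ ≤ c • σ} := isClosed_le continuous_const (by fun_prop)
  isClosed_Ici.inter h

theorem dinf_eq_log_or_eq_top (ρ σ : Mat n) :
    (∃ c : ℝ, IsLeast {c : ℝ | 0 ≤ c ∧ ρ ≤ c • σ} c ∧ Dinf ρ σ = Real.log c) ∨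
      (¬∃ c : ℝ, 0 ≤ c ∧ ρ ≤ c • σ) ∧ Dinf ρ σ = ⊤ := by
  by_cases h : ∃ c : ℝ, 0 ≤ c ∧ ρ ≤ c • σ
  · exact .inl ⟨_, (isClosed_setOf_le_smul ρ σ).isLeast_csInf h ⟨0, fun _ hc ↦ hc.1⟩, if_pos h⟩
  · exact .inr ⟨h, if_neg h⟩

theorem dinf_le_coe_iff (hρ : ρ.PosSemidef) (hρ₀ : ρ ≠ 0) {t : ℝ} :
    Dinf ρ σ ≤ t ↔ ρ ≤ Real.exp t • σ := by
  rcases dinf_eq_log_or_eq_top ρ σ with ⟨c, hc, hlog⟩ | ⟨hnone, htop⟩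
  · have hcpos : 0 < c := pos_of_le_smul hρ hρ₀ hc.1.1 hc.1.2
    rw [hlog, EReal.coe_le_coe_iff, Real.log_le_iff_le_exp hcpos]
    refine ⟨fun hct ↦ ?_, fun h ↦ hc.2 ⟨(Real.exp_pos t).le, h⟩⟩
    have hk : 1 ≤ Real.exp t / c := (one_le_div hcpos).2 hct
    calc ρ ≤ (Real.exp t / c) • ρ := le_smul_of_one_le_left (nonneg_iff_posSemidef.2 hρ) hk
      _ ≤ (Real.exp t / c) • c • σ :=
        smul_le_smul_of_nonneg_left hc.1.2 (zero_le_one.trans hk)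
      _ = Real.exp t • σ := by rw [smul_smul, div_mul_cancel₀ _ hcpos.ne']
  · rw [htop, top_le_iff]
    exact iff_of_false (EReal.coe_ne_top t) fun h ↦ hnone ⟨_, (Real.exp_pos t).le, h⟩

theorem dinf_ne_bot (ρ σ : Mat n) : Dinf ρ σ ≠ ⊥ := by
  unfold Dinf
  split_ifs
  exacts [EReal.coe_ne_bot _, top_ne_bot]

theorem dp_ne_bot (p : ℝ≥0∞) (ρ σ : Mat n) : Dp p ρ σ ≠ ⊥ := by
  unfold Dp Dinf DU
  split_ifs
  all_goals first | exact EReal.coe_ne_bot _ | exact top_ne_bot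

theorem dp_top (ρ σ : Mat n) : Dp ⊤ ρ σ = Dinf ρ σ := if_pos rfl

theorem one_lt_toReal (hp : 1 < p) (hp_top : p ≠ ⊤) : 1 < p.toReal := by
  simpa using (ENNReal.toReal_lt_toReal ENNReal.one_ne_top hp_top).2 hp

theorem dp_eq_coe_log (hp : 1 < p) (hp_top : p ≠ ⊤) (hρ : ρ.PosSemidef) (hρ₀ : ρ ≠ 0)
    (hσ : σ.PosSemidef) (h : suppLe ρ σ) :
    Dp p ρ σ = (((p.toReal - 1)⁻¹ *
      Real.log (traceR (mpow (sandwich p.toReal ρ σ) p.toReal)) : ℝ) : EReal) := by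
  rw [Dp, if_neg hp_top, if_neg hp.ne', if_neg fun h' ↦ h'.2 h,
    if_neg (traceR_mpow_sandwich_pos p.toReal hρ hρ₀ hσ h).ne']

theorem dp_eq_top_of_not_suppLe (hp : 1 < p) (hρ : ρ.PosSemidef) (h : ¬suppLe ρ σ) :
    Dp p ρ σ = ⊤ := by
  rcases eq_or_ne p ⊤ with rfl | hp_top
  · exact (dp_top ρ σ).trans <| if_neg fun ⟨_, _, hc⟩ ↦ h (suppLe_of_le_smul hρ (le_iff.2 hc))
  · rw [Dp, if_neg hp_top, if_neg hp.ne', if_pos ⟨one_lt_toReal hp hp_top, h⟩]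

theorem dinf_smul_right (hρ : ρ.PosSemidef) (hρ₀ : ρ ≠ 0) (σ : Mat n) {c : ℝ} (hc : 0 < c) :
    Dinf ρ (c • σ) = Dinf ρ σ - (Real.log c : ℝ) := by
  have key (t : ℝ) : Dinf ρ (c • σ) ≤ t ↔ Dinf ρ σ - (Real.log c : ℝ) ≤ t := by
    rw [EReal.sub_le_iff_le_add (.inl (EReal.coe_ne_bot _)) (.inl (EReal.coe_ne_top _)),
      ← EReal.coe_add, dinf_le_coe_iff hρ hρ₀, dinf_le_coe_iff hρ hρ₀, Real.exp_add,
      Real.exp_log hc, smul_smul]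
  exact le_antisymm (EReal.le_of_forall_lt_iff_le.1 fun t ht ↦ (key t).2 ht.le)
    (EReal.le_of_forall_lt_iff_le.1 fun t ht ↦ (key t).1 ht.le)

theorem dinf_anti_right (hρ : ρ.PosSemidef) (hρ₀ : ρ ≠ 0) (h : σ₁ ≤ σ) :
    Dinf ρ σ ≤ Dinf ρ σ₁ := by
  refine EReal.le_of_forall_lt_iff_le.1 fun t ht ↦ (dinf_le_coe_iff hρ hρ₀).2 ?_
  exact ((dinf_le_coe_iff hρ hρ₀).1 ht.le).trans
    (smul_le_smul_of_nonneg_left h (Real.exp_pos t).le)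

theorem dp_smul_right (hp : 1 < p) (hρ : ρ.PosSemidef) (hρ₀ : ρ ≠ 0) (hσ : σ.PosSemidef) {c : ℝ}
    (hc : 0 < c) : Dp p ρ (c • σ) = Dp p ρ σ - (Real.log c : ℝ) := by
  rcases eq_or_ne p ⊤ with rfl | hp_top
  · simpa only [dp_top] using dinf_smul_right hρ hρ₀ σ hc
  have hsmul := suppLe_smul_right_iff (ρ := ρ) (σ := σ) hc.ne'
  by_cases hsupp : suppLe ρ σ
  · have hp₁ : 1 < p.toReal := one_lt_toReal hp hp_top
    have hp₁' : p.toReal - 1 ≠ 0 := (sub_pos.2 hp₁).ne'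
    rw [dp_eq_coe_log hp hp_top hρ hρ₀ (hσ.smul hc.le) (hsmul.2 hsupp),
      dp_eq_coe_log hp hp_top hρ hρ₀ hσ hsupp,
      traceR_mpow_sandwich_smul_right (zero_lt_one.trans hp₁).ne' hρ hσ hc,
      Real.log_mul (Real.rpow_pos_of_pos hc _).ne'
        (traceR_mpow_sandwich_pos _ hρ hρ₀ hσ hsupp).ne',
      Real.log_rpow hc, ← EReal.coe_sub]
    congr 1
    field_simp
    ring
  · rw [dp_eq_top_of_not_suppLe hp hρ hsupp, EReal.top_sub_coe,
      dp_eq_top_of_not_suppLe hp hρ (hsmul.not.2 hsupp)]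

theorem dp_anti_right (hp : 1 < p) (hρ : ρ.PosSemidef) (hρ₀ : ρ ≠ 0) (hσ₁ : σ₁.PosSemidef)
    (h : σ₁ ≤ σ) : Dp p ρ σ ≤ Dp p ρ σ₁ := by
  rcases eq_or_ne p ⊤ with rfl | hp_top
  · simpa only [dp_top] using dinf_anti_right hρ hρ₀ h
  have hσ : σ.PosSemidef := posSemidef_of_le hσ₁ h
  by_cases hsupp : suppLe ρ σ₁
  · have hp₁ : 1 < p.toReal := one_lt_toReal hp hp_top
    have hsuppσ : suppLe ρ σ := hsupp.trans (suppLe_of_le hσ₁ h)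
    rw [dp_eq_coe_log hp hp_top hρ hρ₀ hσ hsuppσ, dp_eq_coe_log hp hp_top hρ hρ₀ hσ₁ hsupp,
      EReal.coe_le_coe_iff]
    refine mul_le_mul_of_nonneg_left (Real.log_le_log ?_ ?_) (inv_nonneg.2 (sub_pos.2 hp₁).le)
    · exact traceR_mpow_sandwich_pos _ hρ hρ₀ hσ hsuppσ
    · exact traceR_mpow_sandwich_anti_right hp₁ hρ hσ₁ hsupp h
  · rw [dp_eq_top_of_not_suppLe hp hρ hsupp]
    exact le_top

theorem statement15_general (hp : 1 < p) (hρ : ρ.PosSemidef) (hρ₀ : ρ ≠ 0)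
    (hσ₁ : σ₁.PosSemidef) (hσ : σ.PosSemidef) : Dp p ρ σ ≤ Dp p ρ σ₁ + Dinf σ₁ σ := by
  by_cases hsupp : suppLe ρ σ₁
  swap
  · rw [dp_eq_top_of_not_suppLe hp hρ hsupp, EReal.top_add_of_ne_bot (dinf_ne_bot σ₁ σ)]
    exact le_top
  rcases eq_or_ne (Dinf σ₁ σ) ⊤ with htop | hfin
  · rw [htop, EReal.add_top_of_ne_bot (dp_ne_bot p ρ σ₁)]
    exact le_top
  obtain ⟨t, ht⟩ : ∃ t : ℝ, (t : EReal) = Dinf σ₁ σ :=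
    ⟨_, EReal.coe_toReal hfin (dinf_ne_bot σ₁ σ)⟩
  have hσ₁₀ : σ₁ ≠ 0 := by
    rintro rfl
    exact hρ₀ (by simpa using hsupp.mul_eq_zero (zero_mul 1))
  have hle : σ₁ ≤ Real.exp t • σ := (dinf_le_coe_iff hσ₁ hσ₁₀).1 ht.ge
  have hanti := dp_anti_right hp hρ hρ₀ hσ₁ hle
  rwa [dp_smul_right hp hρ hρ₀ hσ (Real.exp_pos t), Real.log_exp, ht,
    EReal.sub_le_iff_le_add (.inl (dinf_ne_bot σ₁ σ)) (.inl hfin)] at hanti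

end RelativeEntropy

/-- for `1 < p ≤ ∞` and densities `ρ, σ₁, σ` with `σ₁, σ`
positive definite, `D_p(ρ‖σ) ≤ D_p(ρ‖σ₁) + D_∞(σ₁‖σ)`. -/
theorem statement15 {m : ℕ} (p : ℝ≥0∞) (hp : 1 < p)
    (ρ σ₁ σ : Mat (Fin m)) (hρ : IsDensity ρ) (hσ₁ : IsDensity σ₁)
    (hσ : IsDensity σ) (hσ₁pd : σ₁.PosDef) (hσpd : σ.PosDef) :
    Dp p ρ σ ≤ Dp p ρ σ₁ + Dinf σ₁ σ :=
  statement15_general hp hρ.1 hρ.ne_zero hσ₁.1 hσ.1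

end GJL
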